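/- arXiv:0801.4715 — 3 statements merged into one kernel-verified Lean document; each statement's English description precedes it below -/
import Mathlib

section
/- Let r > 0, n ≥ 1, let A be a real n×n symmetric positive semidefinite matrix, let d ≥ 0, let b : ℝⁿ → ℝⁿ be Lipschitz continuous on every bounded subset of ℝⁿ and satisfy ‖b(w)‖ ≤ C₁‖w‖ + C_b for all w ∈ ℝⁿ with constants C₁, C_b ≥ 0, and let η : C([-r,0];ℝⁿ) → [0, r] be continuous and satisfy condition (H) with some constant η_ign ∈ (0, r]. Fix T > 0. Let φ, φ¹, φ², … ∈ C([-r,0];ℝⁿ) with ‖φᵏ − φ‖_C → 0 as k → ∞, and let u, u¹, u², … be mild solutions on [-r,T] with initial conditions φ, φ¹, φ², … respectively. Then sup_{t ∈ [-r,T]} ‖uᵏ(t) − u(t)‖ → 0 as k → ∞; in particular, for every t ∈ [0,T], ‖uᵏ_t − u_t‖_C → 0 as k → ∞. -/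
noncomputable section

/-- The history segment `u_t ∈ C([-r,0];E)`, `u_t(θ) = u(t+θ)`, of a function `u : ℝ → E`
(defined as the zero function in the degenerate case where `s ↦ u(t+s)` fails to be
continuous on `[-r,0]`; under the hypotheses of the theorems below this case never occurs). -/
def histSeg {E : Type*} [NormedAddCommGroup E] (r : ℝ) (u : ℝ → E) (t : ℝ) :
    C(Set.Icc (-r) (0:ℝ), E) := by
  classical
  exact if h : ContinuousOn (fun s : ℝ => u (t + s)) (Set.Icc (-r) 0) then
    ⟨fun θ => u (t + θ.1), continuousOn_iff_continuous_restrict.mp h⟩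
  else 0

/-- Condition (H): the delay functional `η` ignores the values of `φ(θ)` for
`θ ∈ (-ηign, 0]`, i.e. if `φ₁(θ) = φ₂(θ)` for all `θ ∈ [-r, -ηign]` then `η φ₁ = η φ₂`. -/
def CondH {E : Type*} [NormedAddCommGroup E] (r ηign : ℝ)
    (η : C(Set.Icc (-r) (0:ℝ), E) → ℝ) : Prop :=
  ∀ φ₁ φ₂ : C(Set.Icc (-r) (0:ℝ), E),
    (∀ θ : Set.Icc (-r) (0:ℝ), (θ : ℝ) ∈ Set.Icc (-r) (-ηign) → φ₁ θ = φ₂ θ) →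
    η φ₁ = η φ₂

/-- `u : ℝ → ℝⁿ` is a mild solution on `[-r,T]` of
`u'(t) + Au(t) + du(t) = b(u(t - η(u_t)))` with initial condition `φ`:
it is continuous on `[-r,T]`, coincides with `φ` on `[-r,0]`, and satisfies the
variation-of-constants integral equation (with integrable integrand) on `[0,T]`. -/
def IsMildSolution {n : ℕ} (r : ℝ) (hr : 0 < r) (T d : ℝ)
    (A : Matrix (Fin n) (Fin n) ℝ)
    (b : EuclideanSpace ℝ (Fin n) → EuclideanSpace ℝ (Fin n))
    (η : C(Set.Icc (-r) (0:ℝ), EuclideanSpace ℝ (Fin n)) → ℝ)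
    (φ : C(Set.Icc (-r) (0:ℝ), EuclideanSpace ℝ (Fin n)))
    (u : ℝ → EuclideanSpace ℝ (Fin n)) : Prop :=
  ContinuousOn u (Set.Icc (-r) T) ∧
  (∀ θ : Set.Icc (-r) (0:ℝ), u θ = φ θ) ∧
  ∀ t ∈ Set.Icc (0:ℝ) T,
    IntervalIntegrable
      (fun s => Matrix.toEuclideanLin (NormedSpace.exp (-((t - s) • A)))
        (b (u (s - η (histSeg r u s))) - d • u s)) MeasureTheory.volume 0 t ∧
    u t = Matrix.toEuclideanLin (NormedSpace.exp (-(t • A)))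
            (φ ⟨0, Set.right_mem_Icc.mpr (by linarith)⟩) +
      ∫ s in (0:ℝ)..t, Matrix.toEuclideanLin (NormedSpace.exp (-((t - s) • A)))
          (b (u (s - η (histSeg r u s))) - d • u s)

/-!
Condition (H) makes `η(u_s)`, for `s ≤ τ + ηign`, a functional of the restriction `u|_[-r,τ]`
alone, and this functional is continuous for the sup norm. So if `uᵏ → u` uniformly on `[-r,τ]`,
then the delays `η(uᵏ_s)`, and by uniform continuity of `u` also the values `u(s - η(uᵏ_s))`,
converge uniformly for `s ∈ [0, τ + ηign]`. With these in hand the variation-of-constants formula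
turns into a Gronwall inequality for `‖uᵏ - u‖` on `[-r, τ + ηign]`, as long as `uᵏ` stays in a
ball on which `b` is Lipschitz. Both the Gronwall bound and the confinement to the ball come out of
one continuity argument: `‖uᵏ - u‖` can never meet a small barrier solving the linear comparison
equation. Finitely many steps of length `ηign` then cover `[-r,T]`.
-/

open Filter MeasureTheory Set
open scoped Topology

theorem lt_of_forall_Ico_lt_imp_lt {α β : Type*}
    [LinearOrder α] [TopologicalSpace α] [OrderClosedTopology α] [CompactIccSpace α]
    [LinearOrder β] [TopologicalSpace β] [OrderClosedTopology β]
    {a c : α} {w f : α → β} (hw : ContinuousOn w (Icc a c)) (hf : ContinuousOn f (Icc a c))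
    (hstep : ∀ t ∈ Icc a c, (∀ s ∈ Ico a t, w s < f s) → w t < f t) :
    ∀ t ∈ Icc a c, w t < f t := by
  by_contra! hcross
  have hcompact : IsCompact {t ∈ Icc a c | f t ≤ w t} :=
    isCompact_Icc.of_isClosed_subset (isClosed_Icc.isClosed_le hf hw) (sep_subset _ _)
  obtain ⟨t, ⟨ht, hle⟩, hleast⟩ := hcompact.exists_isLeast hcross
  refine hle.not_gt (hstep t ht fun s hs => ?_)
  by_contra! hs'
  exact hs.2.not_ge (hleast ⟨⟨hs.1, hs.2.le.trans ht.2⟩, hs'⟩)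

theorem continuous_gronwallBound (δ K ε : ℝ) : Continuous (gronwallBound δ K ε) :=
  continuous_iff_continuousAt.2 fun x => (hasDerivAt_gronwallBound δ K ε x).continuousAt

theorem gronwallBound_eq_add_integral (δ K ε t : ℝ) :
    gronwallBound δ K ε t = δ + ∫ s in (0 : ℝ)..t, (K * gronwallBound δ K ε s + ε) := by
  have hcont := continuous_gronwallBound δ K ε
  rw [intervalIntegral.integral_eq_sub_of_hasDerivAt
    (fun s _ => hasDerivAt_gronwallBound δ K ε s)
    (Continuous.intervalIntegrable (by fun_prop) 0 t), gronwallBound_x0, add_sub_cancel]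

theorem gronwallBound_mul (c δ K ε x : ℝ) :
    gronwallBound (c * δ) K (c * ε) x = c * gronwallBound δ K ε x := by
  unfold gronwallBound
  split_ifs <;> ring

theorem lt_gronwallBound_of_lt_add_integral {δ P Q r σ : ℝ} {w : ℝ → ℝ}
    (hδ : 0 ≤ δ) (hP : 0 ≤ P) (hQ : 0 ≤ Q) (hσ : 0 ≤ σ) (hw : ContinuousOn w (Icc (-r) σ))
    (hinit : ∀ t ∈ Icc (-r) 0, w t < δ)
    (hstep : ∀ t ∈ Icc 0 σ,
      (∀ s ∈ Ico 0 t, ∀ x ∈ Icc (-r) s, w x ≤ gronwallBound δ P Q s) →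
        w t < δ + ∫ s in (0 : ℝ)..t, (P * gronwallBound δ P Q s + Q)) :
    ∀ t ∈ Icc (-r) σ, w t < gronwallBound δ P Q σ := by
  have hmono : Monotone (gronwallBound δ P Q) := gronwallBound_mono hδ hQ hP
  have hcont : Continuous (gronwallBound δ P Q) := continuous_gronwallBound δ P Q
  have hbarrier : ∀ t ∈ Icc (-r) σ, w t < gronwallBound δ P Q (max t 0) := by
    refine lt_of_forall_Ico_lt_imp_lt hw (by fun_prop) fun t ht hbelow => ?_
    rcases le_total t 0 with ht0 | ht0
    · rw [max_eq_right ht0, gronwallBound_x0]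
      exact hinit t ⟨ht.1, ht0⟩
    · rw [max_eq_left ht0, gronwallBound_eq_add_integral]
      refine hstep t ⟨ht0, ht.2⟩ fun s hs x hx => ?_
      exact (hbelow x ⟨hx.1, hx.2.trans_lt hs.2⟩).le.trans (hmono (max_le hx.2 hs.1))
  exact fun t ht => (hbarrier t ht).trans_le (hmono (max_le ht.2 hσ))

section History

variable {E : Type*} [NormedAddCommGroup E] {r T τ : ℝ}

theorem histSeg_apply {u : ℝ → E} {t : ℝ} (hu : ContinuousOn u (Icc (-r) T)) (ht : t ∈ Icc 0 T)
    (θ : Icc (-r) (0 : ℝ)) : histSeg r u t θ = u (t + θ) := by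
  have hcont : ContinuousOn (fun s => u (t + s)) (Icc (-r) 0) :=
    hu.comp (by fun_prop) fun s hs => ⟨by linarith [hs.1, ht.1], by linarith [hs.2, ht.2]⟩
  rw [histSeg, dif_pos hcont]
  rfl

theorem tendsto_histSeg {ι : Type*} {l : Filter ι} {u : ℝ → E} {v : ι → ℝ → E} {t : ℝ}
    (hu : ContinuousOn u (Icc (-r) T)) (hv : ∀ i, ContinuousOn (v i) (Icc (-r) T))
    (hvu : TendstoUniformlyOn v u l (Icc (-r) T)) (ht : t ∈ Icc 0 T) :
    Tendsto (fun i => histSeg r (v i) t) l (𝓝 (histSeg r u t)) := by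
  rw [ContinuousMap.tendsto_iff_tendstoUniformly]
  intro U hU
  filter_upwards [hvu U hU] with i hi θ
  rw [histSeg_apply hu ht, histSeg_apply (hv i) ht]
  exact hi _ ⟨by linarith [θ.2.1, ht.1], by linarith [θ.2.2, ht.2]⟩

/-- The history `s ↦ (θ ↦ V(s + θ))` of a path `V` on `[-r,τ]`, for all times `s ∈ ℝ`: the argument
`s + θ` is projected to `[-r,τ]`, which means extending `V` by constants.
Under condition (H) it determines the delays of `V` up to time `τ + ηign`. -/
def clampedHist (h : -r ≤ τ) (V : C(Icc (-r) τ, E)) : C(ℝ, C(Icc (-r) (0 : ℝ), E)) :=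
  (V.comp ⟨fun p : ℝ × Icc (-r) (0 : ℝ) => projIcc (-r) τ h (p.1 + p.2), by fun_prop⟩).curry

theorem continuous_clampedHist (h : -r ≤ τ) :
    Continuous (clampedHist h : C(Icc (-r) τ, E) → C(ℝ, C(Icc (-r) (0 : ℝ), E))) :=
  ContinuousMap.continuous_curry.comp (ContinuousMap.continuous_precomp _)

variable {ηign σ : ℝ} {η : C(Icc (-r) (0 : ℝ), E) → ℝ}

theorem CondH.apply_histSeg_eq_apply_clampedHist (hH : CondH r ηign η) (h : -r ≤ τ) (hσT : σ ≤ T)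
    (hσ : σ ≤ τ + ηign) {u : ℝ → E} (hu : ContinuousOn u (Icc (-r) T)) {V : C(Icc (-r) τ, E)}
    (hV : ∀ x, V x = u x) {s : ℝ} (hs : s ∈ Icc 0 σ) :
    η (histSeg r u s) = η (clampedHist h V s) := by
  refine hH _ _ fun θ hθ => ?_
  have hmem : s + θ ∈ Icc (-r) τ := ⟨by linarith [hs.1, θ.2.1], by linarith [hs.2, hθ.2]⟩
  calc histSeg r u s θ = u (s + θ) := histSeg_apply hu ⟨hs.1, hs.2.trans hσT⟩ θ
    _ = V (projIcc (-r) τ h (s + θ)) := by rw [hV, projIcc_of_mem h hmem]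

theorem CondH.tendstoUniformlyOn_delay (hH : CondH r ηign η) (hη : Continuous η)
    (h : -r ≤ τ) (hτT : τ ≤ T) (hσT : σ ≤ T) (hσ : σ ≤ τ + ηign)
    {ι : Type*} {l : Filter ι} {u : ℝ → E} {v : ι → ℝ → E}
    (hu : ContinuousOn u (Icc (-r) T)) (hv : ∀ i, ContinuousOn (v i) (Icc (-r) T))
    (hvu : TendstoUniformlyOn v u l (Icc (-r) τ)) :
    TendstoUniformlyOn (fun i s => η (histSeg r (v i) s)) (fun s => η (histSeg r u s)) l
      (Icc 0 σ) := by
  have hsub : Icc (-r) τ ⊆ Icc (-r) T := Icc_subset_Icc_right hτT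
  have hpath : Tendsto (fun i => (⟨_, ((hv i).mono hsub).domRestrict⟩ : C(Icc (-r) τ, E))) l
      (𝓝 ⟨_, (hu.mono hsub).domRestrict⟩) :=
    ((hu.mono hsub).tendsto_domRestrict_iff_tendstoUniformlyOn fun i => (hv i).mono hsub).2 hvu
  have hdelay := ((ContinuousMap.continuous_postcomp ⟨η, hη⟩).comp
    (continuous_clampedHist h)).continuousAt.tendsto.comp hpath
  have hlim := ContinuousMap.tendsto_iff_forall_isCompact_tendstoUniformlyOn.1 hdelay _
    (isCompact_Icc (a := 0) (b := σ))
  refine (hlim.congr (Eventually.of_forall fun i s hs => ?_)).congr_right fun s hs => ?_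
  · exact (hH.apply_histSeg_eq_apply_clampedHist h hσT hσ (hv i) (fun _ => rfl) hs).symm
  · exact (hH.apply_histSeg_eq_apply_clampedHist h hσT hσ hu (fun _ => rfl) hs).symm

theorem CondH.tendstoUniformlyOn_comp_delay (hH : CondH r ηign η) (hη : ∀ φ, η φ ∈ Icc 0 r)
    (hηcont : Continuous η) (h : -r ≤ τ) (hτT : τ ≤ T) (hσT : σ ≤ T) (hσ : σ ≤ τ + ηign)
    {ι : Type*} {l : Filter ι} {u : ℝ → E} {v : ι → ℝ → E}
    (hu : ContinuousOn u (Icc (-r) T)) (hv : ∀ i, ContinuousOn (v i) (Icc (-r) T))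
    (hvu : TendstoUniformlyOn v u l (Icc (-r) τ)) :
    TendstoUniformlyOn (fun i s => u (s - η (histSeg r (v i) s)))
      (fun s => u (s - η (histSeg r u s))) l (Icc 0 σ) := by
  have hlag : ∀ s ∈ Icc 0 σ, ∀ φ, s - η φ ∈ Icc (-r) T := fun s hs φ =>
    ⟨by linarith [hs.1, (hη φ).2], by linarith [hs.2, (hη φ).1]⟩
  have hshift : TendstoUniformlyOn (fun i s => s - η (histSeg r (v i) s))
      (fun s => s - η (histSeg r u s)) l (Icc 0 σ) := by
    simpa only [Metric.tendstoUniformlyOn_iff, dist_sub_left] using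
      hH.tendstoUniformlyOn_delay hηcont h hτT hσT hσ hu hv hvu
  exact UniformContinuousOn.comp_tendstoUniformlyOn_eventually
    (Eventually.of_forall fun i s hs => hlag s hs _) (fun s hs => hlag s hs _)
    (isCompact_Icc.uniformContinuousOn_of_continuous hu) hshift

end History

section MildSolution

variable {E : Type*} [NormedAddCommGroup E] [NormedSpace ℝ E]

/-- The right-hand side `b(u(s - η(u_s))) - d u(s)` of the delay equation along a path `u`. -/
def delayForcing (r d : ℝ) (b : E → E) (η : C(Icc (-r) (0 : ℝ), E) → ℝ) (u : ℝ → E) (s : ℝ) : E :=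
  b (u (s - η (histSeg r u s))) - d • u s

/-- `u` is a mild solution on `[-r,T]` of the delay equation whose linear part has the solution
operators `S t` (`S t = exp (-tA)` for `u' + Au = …`; the semigroup law is not part of the notion).
The initial history is `u` itself on `[-r,0]`. -/
structure IsDelayMildSolution (r T d : ℝ) (S : ℝ → E →L[ℝ] E) (b : E → E)
    (η : C(Icc (-r) (0 : ℝ), E) → ℝ) (u : ℝ → E) : Prop where
  continuousOn : ContinuousOn u (Icc (-r) T)
  intervalIntegrable : ∀ t ∈ Icc 0 T,
    IntervalIntegrable (fun s => S (t - s) (delayForcing r d b η u s)) volume 0 t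
  eq_add_integral : ∀ t ∈ Icc 0 T,
    u t = S t (u 0) + ∫ s in (0 : ℝ)..t, S (t - s) (delayForcing r d b η u s)

variable {r T d K B : ℝ} {L : NNReal} {S : ℝ → E →L[ℝ] E} {b : E → E}
  {η : C(Icc (-r) (0 : ℝ), E) → ℝ} {u : ℝ → E}

theorem norm_delayForcing_sub_le {v : ℝ → E} {ε ρ s : ℝ} (hη : ∀ φ, η φ ∈ Icc 0 r) (hs : 0 ≤ s)
    (hL : LipschitzOnWith L b (Metric.closedBall 0 (B + 1))) (huB : ∀ x ∈ Icc (-r) s, ‖u x‖ ≤ B)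
    (hvu : ∀ x ∈ Icc (-r) s, ‖v x - u x‖ ≤ ρ) (hρ : ρ ≤ 1)
    (hdelay : ‖u (s - η (histSeg r v s)) - u (s - η (histSeg r u s))‖ ≤ ε) :
    ‖delayForcing r d b η v s - delayForcing r d b η u s‖ ≤ (L + |d|) * ρ + L * ε := by
  have hlag : ∀ φ, s - η φ ∈ Icc (-r) s := fun φ =>
    ⟨by linarith [(hη φ).2], by linarith [(hη φ).1]⟩
  have hu_mem : ∀ x ∈ Icc (-r) s, u x ∈ Metric.closedBall 0 (B + 1) := fun x hx =>
    mem_closedBall_zero_iff.2 (by linarith [huB x hx])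
  have hv_mem : ∀ x ∈ Icc (-r) s, v x ∈ Metric.closedBall 0 (B + 1) := fun x hx =>
    mem_closedBall_zero_iff.2
      (by linarith [huB x hx, hvu x hx, norm_le_norm_add_norm_sub' (v x) (u x)])
  have hb : ‖b (v (s - η (histSeg r v s))) - b (u (s - η (histSeg r u s)))‖ ≤ L * (ρ + ε) := by
    refine (hL.norm_sub_le (hv_mem _ (hlag _)) (hu_mem _ (hlag _))).trans ?_
    gcongr
    exact (norm_sub_le_norm_sub_add_norm_sub _ _ _).trans (add_le_add (hvu _ (hlag _)) hdelay)
  have hd : ‖d • (v s - u s)‖ ≤ |d| * ρ := by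
    rw [norm_smul, Real.norm_eq_abs]
    gcongr
    exact hvu s ⟨(hlag 0).1.trans (hlag 0).2, le_rfl⟩
  calc ‖delayForcing r d b η v s - delayForcing r d b η u s‖
      = ‖(b (v (s - η (histSeg r v s))) - b (u (s - η (histSeg r u s)))) - d • (v s - u s)‖ := by
        rw [delayForcing, delayForcing, sub_sub_sub_comm, ← smul_sub]
    _ ≤ L * (ρ + ε) + |d| * ρ := norm_sub_le_of_le hb hd
    _ = (L + |d|) * ρ + L * ε := by ring

namespace IsDelayMildSolution

theorem norm_sub_le {v : ℝ → E} (hu : IsDelayMildSolution r T d S b η u)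
    (hv : IsDelayMildSolution r T d S b η v) (hS : ∀ t ∈ Icc 0 T, ‖S t‖ ≤ K)
    {t : ℝ} (ht : t ∈ Icc 0 T) {g : ℝ → ℝ} (hg : IntervalIntegrable g volume 0 t)
    (hforcing : ∀ s ∈ Ico 0 t,
      ‖delayForcing r d b η v s - delayForcing r d b η u s‖ ≤ g s) :
    ‖v t - u t‖ ≤ K * (‖v 0 - u 0‖ + ∫ s in (0 : ℝ)..t, g s) := by
  have hdiff : v t - u t = S t (v 0 - u 0) + ∫ s in (0 : ℝ)..t,
      S (t - s) (delayForcing r d b η v s - delayForcing r d b η u s) := by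
    simp only [map_sub]
    rw [intervalIntegral.integral_sub (hv.intervalIntegrable t ht) (hu.intervalIntegrable t ht),
      hv.eq_add_integral t ht, hu.eq_add_integral t ht, add_sub_add_comm]
  have hintegrand : ∀ s ∈ Ico 0 t,
      ‖S (t - s) (delayForcing r d b η v s - delayForcing r d b η u s)‖ ≤ K * g s := fun s hs =>
    (S (t - s)).le_of_opNorm_le_of_le
      (hS _ ⟨by linarith [hs.2], by linarith [hs.1, ht.2]⟩) (hforcing s hs)
  rw [hdiff, mul_add, ← intervalIntegral.integral_const_mul]
  refine norm_add_le_of_le ((S t).le_of_opNorm_le (hS t ht) _)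
    (intervalIntegral.norm_integral_le_of_norm_le ht.1 ?_ (hg.const_mul K))
  filter_upwards [compl_mem_ae_iff.2 (measure_singleton t)] with s hne hs
  exact hintegrand s ⟨hs.1.le, hs.2.lt_of_ne hne⟩

theorem norm_sub_lt_gronwallBound {v : ℝ → E} (hu : IsDelayMildSolution r T d S b η u)
    (hv : IsDelayMildSolution r T d S b η v) (hS : ∀ t ∈ Icc 0 T, ‖S t‖ ≤ K)
    (hη : ∀ φ, η φ ∈ Icc 0 r) (huB : ∀ t ∈ Icc (-r) T, ‖u t‖ ≤ B)
    (hL : LipschitzOnWith L b (Metric.closedBall 0 (B + 1))) {ε σ : ℝ} (hε : 0 < ε)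
    (hσ : σ ∈ Icc 0 T)
    (hε1 : gronwallBound (ε * (K + 1)) (K * (L + |d|)) (ε * (K * L)) σ ≤ 1)
    (hinit : ∀ t ∈ Icc (-r) 0, ‖v t - u t‖ < ε)
    (hdelay : ∀ s ∈ Icc 0 σ,
      ‖u (s - η (histSeg r v s)) - u (s - η (histSeg r u s))‖ ≤ ε) :
    ∀ t ∈ Icc (-r) σ,
      ‖v t - u t‖ < gronwallBound (ε * (K + 1)) (K * (L + |d|)) (ε * (K * L)) σ := by
  have hK : 0 ≤ K := (norm_nonneg _).trans (hS σ hσ)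
  have hr : 0 ≤ r := (hη 0).1.trans (hη 0).2
  have hsub : Icc (-r) σ ⊆ Icc (-r) T := Icc_subset_Icc_right hσ.2
  refine lt_gronwallBound_of_lt_add_integral (by positivity) (by positivity) (by positivity) hσ.1
    ((hv.continuousOn.sub hu.continuousOn).norm.mono hsub) (fun t ht => ?_) fun t ht hbelow => ?_
  · exact (hinit t ht).trans_le (le_mul_of_one_le_right hε.le (by linarith))
  set γ := gronwallBound (ε * (K + 1)) (K * (L + |d|)) (ε * (K * L))
  have hγcont : Continuous γ := continuous_gronwallBound _ _ _
  have hγmono : Monotone γ := gronwallBound_mono (by positivity) (by positivity) (by positivity)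
  have hforcing : ∀ s ∈ Ico 0 t,
      ‖delayForcing r d b η v s - delayForcing r d b η u s‖ ≤ (L + |d|) * γ s + L * ε := by
    intro s hs
    have hsσ : s ≤ σ := hs.2.le.trans ht.2
    exact norm_delayForcing_sub_le hη hs.1 hL
      (fun x hx => huB x ⟨hx.1, hx.2.trans (hsσ.trans hσ.2)⟩) (hbelow s hs)
      ((hγmono hsσ).trans hε1) (hdelay s ⟨hs.1, hsσ⟩)
  have hinit0 : K * ‖v 0 - u 0‖ < ε * (K + 1) := by
    nlinarith [hinit 0 ⟨by linarith, le_rfl⟩]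
  calc ‖v t - u t‖ ≤ K * (‖v 0 - u 0‖ + ∫ s in (0 : ℝ)..t, ((L + |d|) * γ s + L * ε)) :=
        hu.norm_sub_le hv hS ⟨ht.1, ht.2.trans hσ.2⟩
          (Continuous.intervalIntegrable (by fun_prop) _ _) hforcing
    _ = K * ‖v 0 - u 0‖ + ∫ s in (0 : ℝ)..t, (K * (L + |d|) * γ s + ε * (K * L)) := by
        rw [mul_add, ← intervalIntegral.integral_const_mul]
        congr with s
        ring
    _ < ε * (K + 1) + ∫ s in (0 : ℝ)..t, (K * (L + |d|) * γ s + ε * (K * L)) := by gcongr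

variable {ηign : ℝ} {ι : Type*} {l : Filter ι} {v : ι → ℝ → E}

theorem tendstoUniformlyOn_extend (hu : IsDelayMildSolution r T d S b η u)
    (hv : ∀ i, IsDelayMildSolution r T d S b η (v i)) (hS : ∀ t ∈ Icc 0 T, ‖S t‖ ≤ K)
    (hb : ∀ s : Set E, Bornology.IsBounded s → ∃ L : NNReal, LipschitzOnWith L b s)
    (hη : ∀ φ, η φ ∈ Icc 0 r) (hηcont : Continuous η) (hH : CondH r ηign η) {τ σ : ℝ}
    (hτ : τ ∈ Icc 0 T) (hσ : σ ∈ Icc 0 T) (hτσ : σ ≤ τ + ηign)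
    (hvu : TendstoUniformlyOn v u l (Icc (-r) τ)) :
    TendstoUniformlyOn v u l (Icc (-r) σ) := by
  obtain ⟨B, huB⟩ := isCompact_Icc.exists_bound_of_continuousOn hu.continuousOn
  obtain ⟨L, hL⟩ := hb _ (Metric.isBounded_closedBall (x := 0) (r := B + 1))
  have hr : 0 ≤ r := (hη 0).1.trans (hη 0).2
  have hdelay := hH.tendstoUniformlyOn_comp_delay hη hηcont (by linarith [hτ.1]) hτ.2 hσ.2 hτσ
    hu.continuousOn (fun i => (hv i).continuousOn) hvu
  rw [Metric.tendstoUniformlyOn_iff] at hvu hdelay ⊢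
  simp only [dist_eq_norm_sub'] at hvu hdelay ⊢
  intro ε hε
  obtain ⟨δ, hδ, hδε⟩ := exists_pos_mul_lt (lt_min hε one_pos)
    (gronwallBound (K + 1) (K * (L + |d|)) (K * L) σ)
  rw [mul_comm, ← gronwallBound_mul, lt_min_iff] at hδε
  filter_upwards [hvu δ hδ, hdelay δ hδ] with i hclose hlag t ht
  exact (hu.norm_sub_lt_gronwallBound (hv i) hS hη huB hL hδ hσ hδε.2.le
    (fun s hs => hclose s ⟨hs.1, hs.2.trans hτ.1⟩) (fun s hs => (hlag s hs).le) t ht).trans hδε.1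

theorem tendstoUniformlyOn_of_initial (hu : IsDelayMildSolution r T d S b η u)
    (hv : ∀ i, IsDelayMildSolution r T d S b η (v i)) (hT : 0 ≤ T)
    (hS : ∀ t ∈ Icc 0 T, ‖S t‖ ≤ K)
    (hb : ∀ s : Set E, Bornology.IsBounded s → ∃ L : NNReal, LipschitzOnWith L b s)
    (hη : ∀ φ, η φ ∈ Icc 0 r) (hηcont : Continuous η) (hign : 0 < ηign) (hH : CondH r ηign η)
    (hinit : TendstoUniformlyOn v u l (Icc (-r) 0)) :
    TendstoUniformlyOn v u l (Icc (-r) T) := by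
  have hsteps : ∀ j : ℕ, TendstoUniformlyOn v u l (Icc (-r) (min T (j * ηign))) := by
    have hmem : ∀ j : ℕ, min T (j * ηign) ∈ Icc 0 T := fun j =>
      ⟨le_min hT (by positivity), min_le_left _ _⟩
    intro j
    induction j with
    | zero => simpa [hT] using hinit
    | succ j ih =>
      refine hu.tendstoUniformlyOn_extend hv hS hb hη hηcont hH (hmem j) (hmem (j + 1)) ?_ ih
      rw [min_add, Nat.cast_succ, add_one_mul]
      exact min_le_min_right _ (by linarith)
  obtain ⟨j, hj⟩ := exists_nat_ge (T / ηign)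
  simpa only [min_eq_left ((div_le_iff₀ hign).1 hj)] using hsteps j

end IsDelayMildSolution

end MildSolution

open scoped Matrix.Norms.L2Operator in
theorem exists_norm_toEuclideanCLM_exp_le {m : Type*} [Fintype m] [DecidableEq m]
    (A : Matrix m m ℝ) (T : ℝ) :
    ∃ K, ∀ t ∈ Icc 0 T, ‖Matrix.toEuclideanCLM (𝕜 := ℝ) (NormedSpace.exp (-(t • A)))‖ ≤ K := by
  let : NormedAlgebra ℚ (Matrix m m ℝ) := NormedAlgebra.restrictScalars ℚ ℝ _
  have hcont : Continuous fun t : ℝ => NormedSpace.exp (-(t • A)) :=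
    NormedSpace.exp_continuous.comp (by fun_prop)
  simp only [Matrix.l2_opNorm_toEuclideanCLM]
  exact isCompact_Icc.exists_bound_of_continuousOn hcont.continuousOn

namespace IsMildSolution

variable {n : ℕ} {r : ℝ} {hr : 0 < r} {T d : ℝ} {A : Matrix (Fin n) (Fin n) ℝ}
  {b : EuclideanSpace ℝ (Fin n) → EuclideanSpace ℝ (Fin n)}
  {η : C(Icc (-r) (0 : ℝ), EuclideanSpace ℝ (Fin n)) → ℝ}

theorem isDelayMildSolution {φ : C(Icc (-r) (0 : ℝ), EuclideanSpace ℝ (Fin n))}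
    {u : ℝ → EuclideanSpace ℝ (Fin n)} (hu : IsMildSolution r hr T d A b η φ u) :
    IsDelayMildSolution r T d
      (fun t => Matrix.toEuclideanCLM (𝕜 := ℝ) (NormedSpace.exp (-(t • A)))) b η u where
  continuousOn := hu.1
  intervalIntegrable t ht := (hu.2.2 t ht).1
  eq_add_integral t ht := by
    have h := (hu.2.2 t ht).2
    rwa [← hu.2.1] at h

theorem tendstoUniformlyOn_initial {ι : Type*} {l : Filter ι}
    {φ : C(Icc (-r) (0 : ℝ), EuclideanSpace ℝ (Fin n))}
    {ψ : ι → C(Icc (-r) (0 : ℝ), EuclideanSpace ℝ (Fin n))}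
    {u : ℝ → EuclideanSpace ℝ (Fin n)} {v : ι → ℝ → EuclideanSpace ℝ (Fin n)}
    (hu : IsMildSolution r hr T d A b η φ u) (hv : ∀ i, IsMildSolution r hr T d A b η (ψ i) (v i))
    (hψ : Tendsto (fun i => ‖ψ i - φ‖) l (𝓝 0)) :
    TendstoUniformlyOn v u l (Icc (-r) 0) := by
  rw [← tendsto_iff_norm_sub_tendsto_zero, ContinuousMap.tendsto_iff_tendstoUniformly] at hψ
  intro U hU
  filter_upwards [hψ U hU] with i hi t ht
  simpa only [hu.2.1 ⟨t, ht⟩, (hv i).2.1 ⟨t, ht⟩] using hi ⟨t, ht⟩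

end IsMildSolution

theorem mild_solutions_continuous_dependence_general
    {E : Type*} [NormedAddCommGroup E] [NormedSpace ℝ E] [CompleteSpace E]
    {r T d K ηign : ℝ} (hT : 0 ≤ T) {S : ℝ → E →L[ℝ] E} (hS : ∀ t ∈ Icc 0 T, ‖S t‖ ≤ K)
    {b : E → E} (hb : ∀ s : Set E, Bornology.IsBounded s → ∃ L : NNReal, LipschitzOnWith L b s)
    {η : C(Icc (-r) (0 : ℝ), E) → ℝ} (hη : ∀ φ, η φ ∈ Icc 0 r) (hηcont : Continuous η)
    (hign : 0 < ηign) (hH : CondH r ηign η)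
    {ι : Type*} {l : Filter ι} {u : ℝ → E} {v : ι → ℝ → E}
    (hu : IsDelayMildSolution r T d S b η u) (hv : ∀ i, IsDelayMildSolution r T d S b η (v i))
    (hinit : TendstoUniformlyOn v u l (Icc (-r) 0)) :
    TendstoUniformlyOn v u l (Icc (-r) T) ∧
      ∀ t ∈ Icc 0 T, Tendsto (fun i => ‖histSeg r (v i) t - histSeg r u t‖) l (𝓝 0) := by
  have hvu := hu.tendstoUniformlyOn_of_initial hv hT hS hb hη hηcont hign hH hinit
  exact ⟨hvu, fun t ht => tendsto_iff_norm_sub_tendsto_zero.1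
    (tendsto_histSeg hu.continuousOn (fun i => (hv i).continuousOn) hvu ht)⟩

/-- continuous dependence of mild solutions on the initial data (property 4
of Theorem 1): if `‖φᵏ − φ‖_C → 0` then the corresponding mild solutions converge
uniformly on `[-r,T]`, and in particular the history segments converge in `C([-r,0];ℝⁿ)`
for every `t ∈ [0,T]`. -/
theorem mild_solutions_continuous_dependence
    {n : ℕ} (hn : 1 ≤ n) (r : ℝ) (hr : 0 < r)
    (A : Matrix (Fin n) (Fin n) ℝ) (hA : A.PosSemidef) (hAs : A.IsSymm)
    (d : ℝ) (hd : 0 ≤ d)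
    (b : EuclideanSpace ℝ (Fin n) → EuclideanSpace ℝ (Fin n))
    (hbLip : ∀ s : Set (EuclideanSpace ℝ (Fin n)), Bornology.IsBounded s →
      ∃ L : NNReal, LipschitzOnWith L b s)
    (C₁ Cb : ℝ) (hC₁ : 0 ≤ C₁) (hCb : 0 ≤ Cb)
    (hbgrow : ∀ w, ‖b w‖ ≤ C₁ * ‖w‖ + Cb)
    (η : C(Set.Icc (-r) (0:ℝ), EuclideanSpace ℝ (Fin n)) → ℝ)
    (hηrange : ∀ φ, η φ ∈ Set.Icc (0:ℝ) r) (hηcont : Continuous η)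
    (ηign : ℝ) (hign0 : 0 < ηign) (hignr : ηign ≤ r) (hH : CondH r ηign η)
    (T : ℝ) (hT : 0 < T)
    (φ : C(Set.Icc (-r) (0:ℝ), EuclideanSpace ℝ (Fin n)))
    (φseq : ℕ → C(Set.Icc (-r) (0:ℝ), EuclideanSpace ℝ (Fin n)))
    (u : ℝ → EuclideanSpace ℝ (Fin n))
    (useq : ℕ → ℝ → EuclideanSpace ℝ (Fin n))
    (hu : IsMildSolution r hr T d A b η φ u)
    (huseq : ∀ k, IsMildSolution r hr T d A b η (φseq k) (useq k))
    (hconv : Filter.Tendsto (fun k => ‖φseq k - φ‖) Filter.atTop (nhds 0)) :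
    TendstoUniformlyOn (fun k => useq k) u Filter.atTop (Set.Icc (-r) T) ∧
    ∀ t ∈ Set.Icc (0:ℝ) T,
      Filter.Tendsto (fun k => ‖histSeg r (useq k) t - histSeg r u t‖)
        Filter.atTop (nhds 0) := by
  obtain ⟨K, hK⟩ := exists_norm_toEuclideanCLM_exp_le A T
  exact mild_solutions_continuous_dependence_general hT.le hK hbLip hηrange hηcont hign0 hH
    hu.isDelayMildSolution (fun k => (huseq k).isDelayMildSolution)
    (hu.tendstoUniformlyOn_initial huseq hconv)
end
end

section
/- Let r > 0, n ≥ 1, let A be a real n×n symmetric matrix satisfying ⟨A v, v⟩ ≥ λ₁‖v‖² for all v ∈ ℝⁿ, where λ₁ > 0, let d ≥ 0, let b : ℝⁿ → ℝⁿ be bounded with ‖b(w)‖ ≤ C_b for all w ∈ ℝⁿ, and let η : C([-r,0];ℝⁿ) → [0, r]. Let T > 0, φ ∈ C([-r,0];ℝⁿ), and let u : [-r,T] → ℝⁿ be a mild solution of u'(t) + A u(t) + d u(t) = b(u(t − η(u_t))) with initial condition φ. Then for all t ∈ [0,T]: ‖u(t)‖ ≤ e^{−(λ₁+d)t}·‖φ(0)‖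 + C_b/(λ₁+d). In particular, the system is dissipative: every solution eventually enters the ball of radius C_b/(λ₁+d) + 1. -/
noncomputable section

/-!
For fixed `t`, put `w(s) = e^{-(t-s)A} u(s)`. By the semigroup law and the variation of constants
formula, `w(s) = e^{-tA} y + ∫₀ˢ e^{-(t-τ)A} (f(τ) - d u(τ)) dτ`, so `w` is absolutely continuous
with `w'(s) = e^{-(t-s)A} f(s) - d w(s)` almost everywhere. The integrating factor `e^{-d(t-s)}`
removes the term `- d w`, and integration over `[0, t]` shows that `u` is the mild solution for the
generator `A + d` and the forcing `f` alone. Since `⟨(A + d)v, v⟩ ≥ (λ + d)‖v‖²`, the energy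
`e^{2(λ+d)t} ‖e^{-t(A+d)}v‖²` is nonincreasing in `t`; hence `‖e^{-t(A+d)}‖ ≤ e^{-(λ+d)t}`, and the
triangle inequality in the new formula gives the bound, whatever the delay does inside `f`.
-/

open MeasureTheory NormedSpace Set

section AbsolutelyContinuous

variable {X Y E : Type*} [PseudoMetricSpace X] [PseudoMetricSpace Y]
  [NormedAddCommGroup E] [NormedSpace ℝ E] {a b : ℝ}

theorem absolutelyContinuousOnInterval_of_dist_le {f : ℝ → X} {g : ℝ → Y}
    (hg : AbsolutelyContinuousOnInterval g a b)
    (hfg : ∀ x ∈ uIcc a b, ∀ y ∈ uIcc a b, dist (f x) (f y) ≤ dist (g x) (g y)) :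
    AbsolutelyContinuousOnInterval f a b := by
  rw [absolutelyContinuousOnInterval_iff] at hg ⊢
  intro ε hε
  obtain ⟨δ, hδ, hgδ⟩ := hg ε hε
  refine ⟨δ, hδ, fun I hI hlength ↦ (Finset.sum_le_sum fun i hi ↦ ?_).trans_lt (hgδ I hI hlength)⟩
  exact hfg _ (hI.1 i hi).1 _ (hI.1 i hi).2

theorem absolutelyContinuousOnInterval_integral {f : ℝ → E} {c : ℝ}
    (hf : IntervalIntegrable f volume a b) (hc : c ∈ uIcc a b) :
    AbsolutelyContinuousOnInterval (fun x ↦ ∫ s in c..x, f s) a b := by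
  refine absolutelyContinuousOnInterval_of_dist_le
    (hf.norm.absolutelyContinuousOnInterval_intervalIntegral hc) fun x hx y hy ↦ ?_
  have hfc : ∀ z ∈ uIcc a b, IntervalIntegrable f volume c z := fun z hz ↦
    hf.mono_set (uIcc_subset_uIcc hc hz)
  rw [dist_eq_norm, Real.dist_eq,
    intervalIntegral.integral_interval_sub_left (hfc x hx) (hfc y hy),
    intervalIntegral.integral_interval_sub_left (hfc x hx).norm (hfc y hy).norm]
  exact intervalIntegral.norm_integral_le_abs_integral_norm

theorem intervalIntegrable_deriv_smul_add_smul {c : ℝ → ℝ} {f f' : ℝ → E}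
    (hc : AbsolutelyContinuousOnInterval c a b) (hf : ContinuousOn f (uIcc a b))
    (hf' : IntervalIntegrable f' volume a b) :
    IntervalIntegrable (fun x ↦ deriv c x • f x + c x • f' x) volume a b :=
  (hc.intervalIntegrable_deriv.smul_continuousOn hf).add (hf'.continuousOn_smul hc.continuousOn)

variable [CompleteSpace E]

theorem integral_eq_sub_of_ae_hasDerivAt {f f' : ℝ → E}
    (hf : AbsolutelyContinuousOnInterval f a b)
    (hderiv : ∀ᵐ x, x ∈ uIcc a b → HasDerivAt f (f' x) x)
    (hf' : IntervalIntegrable f' volume a b) :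
    ∫ x in a..b, f' x = f b - f a := by
  have hderiv_zero : ∀ᵐ x, x ∈ uIcc a b → HasDerivAt (fun x ↦ f x - ∫ s in a..x, f' s) 0 x := by
    filter_upwards [hderiv, hf'.ae_hasDerivAt_integral] with x hfx hintx hx
    simpa only [sub_self] using (hfx hx).fun_sub (hintx hx a left_mem_uIcc)
  obtain ⟨C, hC⟩ := (hf.fun_sub
    (absolutelyContinuousOnInterval_integral hf' left_mem_uIcc)).const_of_ae_hasDerivAt_zero
      hderiv_zero
  have heq := (hC b right_mem_uIcc).trans (hC a left_mem_uIcc).symm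
  rw [intervalIntegral.integral_same, sub_zero] at heq
  rw [← heq, sub_sub_cancel]

theorem integral_deriv_smul_add_smul_eq_sub {c : ℝ → ℝ} {f f' : ℝ → E}
    (hc : AbsolutelyContinuousOnInterval c a b) (hf : AbsolutelyContinuousOnInterval f a b)
    (hderiv : ∀ᵐ x, x ∈ uIcc a b → HasDerivAt f (f' x) x)
    (hf' : IntervalIntegrable f' volume a b) :
    ∫ x in a..b, (deriv c x • f x + c x • f' x) = c b • f b - c a • f a := by
  refine integral_eq_sub_of_ae_hasDerivAt (hc.fun_smul hf) ?_
    (intervalIntegrable_deriv_smul_add_smul hc hf.continuousOn hf')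
  filter_upwards [hc.ae_differentiableAt, hderiv] with x hcx hfx hx
  simpa only [add_comm] using (hcx hx).hasDerivAt.fun_smul (hfx hx)

theorem integral_deriv_smul_primitive_add_smul {c : ℝ → ℝ} {g : ℝ → E}
    (hc : AbsolutelyContinuousOnInterval c a b) (hg : IntervalIntegrable g volume a b) (y : E) :
    ∫ x in a..b, (deriv c x • (y + ∫ s in a..x, g s) + c x • g x) =
      c b • (y + ∫ s in a..b, g s) - c a • y := by
  have hprimitive : AbsolutelyContinuousOnInterval (fun x ↦ y + ∫ s in a..x, g s) a b :=
    (LipschitzWith.const y).lipschitzOnWith.absolutelyContinuousOnInterval.fun_add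
      (absolutelyContinuousOnInterval_integral hg left_mem_uIcc)
  have hderiv : ∀ᵐ x, x ∈ uIcc a b → HasDerivAt (fun x ↦ y + ∫ s in a..x, g s) (g x) x := by
    filter_upwards [hg.ae_hasDerivAt_integral] with x hx hxab
    exact (hx hxab a left_mem_uIcc).const_add y
  simpa using integral_deriv_smul_add_smul_eq_sub hc hprimitive hderiv hg

end AbsolutelyContinuous

section Exponential

variable {𝔸 : Type*} [NormedRing 𝔸] [NormedAlgebra ℝ 𝔸] [CompleteSpace 𝔸]

theorem exp_neg_add_smul (a : 𝔸) (s t : ℝ) :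
    exp (-((s + t) • a)) = exp (-(s • a)) * exp (-(t • a)) := by
  let : NormedAlgebra ℚ 𝔸 := NormedAlgebra.restrictScalars ℚ ℝ 𝔸
  rw [add_smul, neg_add]
  exact exp_add_of_commute
    ((((Commute.refl a).smul_left s).smul_right t).neg_left.neg_right)

theorem exp_neg_smul_add_smul_one (a : 𝔸) (d t : ℝ) :
    exp (-(t • (a + d • (1 : 𝔸)))) = Real.exp (-(d * t)) • exp (-(t • a)) := by
  let : NormedAlgebra ℚ 𝔸 := NormedAlgebra.restrictScalars ℚ ℝ 𝔸
  have hsplit : -(t • (a + d • (1 : 𝔸))) = algebraMap ℝ 𝔸 (-(d * t)) + -(t • a) := by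
    rw [Algebra.algebraMap_eq_smul_one]
    module
  rw [hsplit, exp_add_of_commute (Algebra.commute_algebraMap_left _ _), ← algebraMap_exp_comm,
    ← Real.exp_eq_exp_ℝ, ← Algebra.smul_def]

theorem hasDerivAt_exp_neg_smul (a : 𝔸) (t : ℝ) :
    HasDerivAt (fun s : ℝ ↦ exp (-(s • a))) (-(a * exp (-(t • a)))) t := by
  simpa only [smul_neg, neg_mul] using hasDerivAt_exp_smul_const' (𝕂 := ℝ) (-a) t

end Exponential

theorem norm_exp_neg_smul_apply_le {E : Type*} [NormedAddCommGroup E] [InnerProductSpace ℝ E]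
    [CompleteSpace E] {A : E →L[ℝ] E} {ω : ℝ} (hA : ∀ v, ω * ‖v‖ ^ 2 ≤ inner ℝ (A v) v)
    {t : ℝ} (ht : 0 ≤ t) (v : E) :
    ‖exp (-(t • A)) v‖ ≤ Real.exp (-(ω * t)) * ‖v‖ := by
  let x : ℝ → E := fun s ↦ exp (-(s • A)) v
  have hx (s : ℝ) : HasDerivAt x (-(A (x s))) s := by
    simpa using (hasDerivAt_exp_neg_smul A s).clm_apply (hasDerivAt_const s v)
  have hweight (s : ℝ) :
      HasDerivAt (fun s ↦ Real.exp (2 * ω * s)) (2 * ω * Real.exp (2 * ω * s)) s := by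
    simpa [mul_comm] using ((hasDerivAt_id s).const_mul (2 * ω)).exp
  have henergy : Antitone fun s ↦ Real.exp (2 * ω * s) * ‖x s‖ ^ 2 := by
    refine antitone_of_hasDerivAt_nonpos (fun s ↦ (hweight s).mul (hx s).norm_sq) fun s ↦ ?_
    rw [inner_neg_right, real_inner_comm]
    have hdissipation := mul_le_mul_of_nonneg_left (hA (x s)) (Real.exp_pos (2 * ω * s)).le
    simp only [Pi.zero_apply]
    linarith
  have hle : (Real.exp (ω * t) * ‖x t‖) ^ 2 ≤ ‖v‖ ^ 2 := by
    simpa [x, mul_pow, ← Real.exp_nat_mul, mul_assoc] using henergy ht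
  rw [Real.exp_neg, ← div_eq_inv_mul, le_div_iff₀' (Real.exp_pos _)]
  exact le_of_sq_le_sq hle (norm_nonneg v)

theorem integral_exp_mul_sub_le_inv {ω : ℝ} (hω : 0 < ω) (t : ℝ) :
    ∫ s in 0..t, Real.exp (ω * (s - t)) ≤ ω⁻¹ := by
  have hintegral : ∫ s in 0..t, Real.exp (ω * (s - t)) = ω⁻¹ * (1 - Real.exp (-(ω * t))) := by
    simp [mul_sub, intervalIntegral.integral_comp_mul_sub _ hω.ne']
  rw [hintegral]
  exact mul_le_of_le_one_right (inv_nonneg.mpr hω.le) (sub_le_self _ (Real.exp_pos _).le)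

/-- `u` solves `u' + A u = f`, `u 0 = y` on `[0, T]` in the mild sense, that is, it is given by the
variation of constants formula. Integrability is part of the definition, since the Bochner integral
of a nonintegrable function is `0`. -/
def IsForcedMildSolution {E : Type*} [NormedAddCommGroup E] [NormedSpace ℝ E]
    (A : E →L[ℝ] E) (f : ℝ → E) (y : E) (T : ℝ) (u : ℝ → E) : Prop :=
  ∀ t ∈ Icc 0 T,
    IntervalIntegrable (fun s ↦ exp (-((t - s) • A)) (f s)) volume 0 t ∧
    u t = exp (-(t • A)) y + ∫ s in 0..t, exp (-((t - s) • A)) (f s)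

namespace IsForcedMildSolution

variable {E : Type*} [NormedAddCommGroup E] [NormedSpace ℝ E]
  {A : E →L[ℝ] E} {f u : ℝ → E} {y : E} {s t d C T ω : ℝ}

theorem norm_le_exp_mul_add_div (hu : IsForcedMildSolution A f y T u) (hω : 0 < ω)
    (hA : ∀ τ, 0 ≤ τ → ∀ v, ‖exp (-(τ • A)) v‖ ≤ Real.exp (-(ω * τ)) * ‖v‖)
    (hf : ∀ s ∈ Icc 0 T, ‖f s‖ ≤ C) (ht : t ∈ Icc 0 T) :
    ‖u t‖ ≤ Real.exp (-(ω * t)) * ‖y‖ + C / ω := by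
  have hC : 0 ≤ C := (norm_nonneg _).trans (hf t ht)
  obtain ⟨-, hut⟩ := hu t ht
  have hkernel : ∀ s ∈ Ioc 0 t, ‖exp (-((t - s) • A)) (f s)‖ ≤ Real.exp (ω * (s - t)) * C := by
    intro s hs
    calc ‖exp (-((t - s) • A)) (f s)‖ ≤ Real.exp (-(ω * (t - s))) * ‖f s‖ :=
          hA _ (sub_nonneg.mpr hs.2) _
      _ ≤ Real.exp (ω * (s - t)) * C := by
          rw [← mul_neg, neg_sub]
          gcongr
          exact hf s ⟨hs.1.le, hs.2.trans ht.2⟩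
  calc ‖u t‖ ≤ ‖exp (-(t • A)) y‖ + ‖∫ s in 0..t, exp (-((t - s) • A)) (f s)‖ :=
        hut ▸ norm_add_le _ _
    _ ≤ Real.exp (-(ω * t)) * ‖y‖ + ∫ s in 0..t, Real.exp (ω * (s - t)) * C :=
        add_le_add (hA t ht.1 y) (intervalIntegral.norm_integral_le_of_norm_le ht.1
          (.of_forall hkernel) (Continuous.intervalIntegrable (by fun_prop) _ _))
    _ ≤ Real.exp (-(ω * t)) * ‖y‖ + C / ω := by
        rw [intervalIntegral.integral_mul_const, div_eq_inv_mul]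
        gcongr
        exact integral_exp_mul_sub_le_inv hω t

variable [CompleteSpace E]

theorem exp_neg_sub_smul_apply (hu : IsForcedMildSolution A f y T u) (hs : s ∈ Icc 0 T) (t : ℝ) :
    exp (-((t - s) • A)) (u s) =
      exp (-(t • A)) y + ∫ τ in 0..s, exp (-((t - τ) • A)) (f τ) := by
  have hexp (τ : ℝ) (v : E) :
      exp (-((t - s) • A)) (exp (-((s - τ) • A)) v) = exp (-((t - τ) • A)) v := by
    rw [← sub_add_sub_cancel t s τ, exp_neg_add_smul (𝔸 := E →L[ℝ] E)]
    rfl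
  have hinitial := hexp 0 y
  rw [sub_zero, sub_zero] at hinitial
  obtain ⟨hint, hus⟩ := hu s hs
  rw [hus, map_add, hinitial, ← ContinuousLinearMap.intervalIntegral_comp_comm _ hint]
  simp only [hexp]

theorem add_smul_one (hu : IsForcedMildSolution A (fun s ↦ f s - d • u s) y T u) :
    IsForcedMildSolution (A + d • 1) f y T u := by
  intro t ht
  let c : ℝ → ℝ := fun s ↦ Real.exp (-(d * (t - s)))
  let g : ℝ → E := fun s ↦ exp (-((t - s) • A)) (f s - d • u s)
  let w : ℝ → E := fun s ↦ exp (-(t • A)) y + ∫ τ in 0..s, g τ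
  have hg : IntervalIntegrable g volume 0 t := (hu t ht).1
  have hc : AbsolutelyContinuousOnInterval c 0 t :=
    ContDiff.contDiffOn (by fun_prop) |>.absolutelyContinuousOnInterval
  have hc_deriv (s : ℝ) : deriv c s = d * c s := by
    simpa [c, mul_comm] using (((hasDerivAt_id s).const_sub t).const_mul d).neg.exp.deriv
  have hw : ContinuousOn w (uIcc 0 t) :=
    continuousOn_const.add (intervalIntegral.continuousOn_primitive_interval' hg left_mem_uIcc)
  have hintegrand : EqOn (fun s ↦ deriv c s • w s + c s • g s)
      (fun s ↦ exp (-((t - s) • (A + d • (1 : E →L[ℝ] E)))) (f s)) (uIcc 0 t) := by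
    intro s hs
    rw [uIcc_of_le ht.1] at hs
    have hws : exp (-((t - s) • A)) (u s) = w s :=
      hu.exp_neg_sub_smul_apply ⟨hs.1, hs.2.trans ht.2⟩ t
    simp only [hc_deriv, ← hws, g, c, exp_neg_smul_add_smul_one (𝔸 := E →L[ℝ] E), map_sub, map_smul,
      smul_apply]
    module
  have hinitial : c 0 • exp (-(t • A)) y = exp (-(t • (A + d • (1 : E →L[ℝ] E)))) y := by
    simp only [c, exp_neg_smul_add_smul_one (𝔸 := E →L[ℝ] E), sub_zero, smul_apply]
  have hct : c t = 1 := by simp [c]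
  have hwt : w t = u t := (hu t ht).2.symm
  have hproduct : ∫ s in 0..t, exp (-((t - s) • (A + d • (1 : E →L[ℝ] E)))) (f s) =
      u t - exp (-(t • (A + d • (1 : E →L[ℝ] E)))) y := by
    calc _ = ∫ s in 0..t, (deriv c s • w s + c s • g s) :=
          (intervalIntegral.integral_congr hintegrand).symm
      _ = c t • w t - c 0 • exp (-(t • A)) y := integral_deriv_smul_primitive_add_smul hc hg _
      _ = _ := by rw [hct, one_smul, hwt, hinitial]
  exact ⟨(intervalIntegrable_deriv_smul_add_smul hc hw hg).congr
    (hintegrand.mono uIoc_subset_uIcc), by rw [hproduct, add_sub_cancel]⟩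

end IsForcedMildSolution

theorem toEuclideanCLM_exp {ι : Type*} [Fintype ι] [DecidableEq ι] (A : Matrix ι ι ℝ) :
    Matrix.toEuclideanCLM (𝕜 := ℝ) (exp A) = exp (Matrix.toEuclideanCLM (𝕜 := ℝ) A) := by
  open scoped Matrix.Norms.Operator in
  exact map_exp (Matrix.toEuclideanCLM (n := ι) (𝕜 := ℝ)) (LinearMap.continuous_of_finiteDimensional
    (Matrix.toEuclideanCLM (n := ι) (𝕜 := ℝ)).toAlgEquiv.toLinearMap) A

theorem IsMildSolution.isForcedMildSolution {n : ℕ} {r : ℝ} {hr : 0 < r} {T d : ℝ}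
    {A : Matrix (Fin n) (Fin n) ℝ}
    {b : EuclideanSpace ℝ (Fin n) → EuclideanSpace ℝ (Fin n)}
    {η : C(Icc (-r) (0 : ℝ), EuclideanSpace ℝ (Fin n)) → ℝ}
    {φ : C(Icc (-r) (0 : ℝ), EuclideanSpace ℝ (Fin n))}
    {u : ℝ → EuclideanSpace ℝ (Fin n)} (hu : IsMildSolution r hr T d A b η φ u) :
    IsForcedMildSolution (Matrix.toEuclideanCLM (𝕜 := ℝ) A)
      (fun s ↦ b (u (s - η (histSeg r u s))) - d • u s)
      (φ ⟨0, right_mem_Icc.mpr (by linarith)⟩) T u := by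
  have hexp (τ : ℝ) (v : EuclideanSpace ℝ (Fin n)) :
      Matrix.toEuclideanLin (exp (-(τ • A))) v =
        exp (-(τ • Matrix.toEuclideanCLM (𝕜 := ℝ) A)) v := by
    rw [← map_smul, ← map_neg, ← toEuclideanCLM_exp]
    rfl
  obtain ⟨-, -, hmild⟩ := hu
  simpa only [IsForcedMildSolution, hexp] using hmild

theorem mild_solution_dissipative_general {E : Type*} [NormedAddCommGroup E]
    [InnerProductSpace ℝ E] [CompleteSpace E] {A : E →L[ℝ] E} {f u : ℝ → E} {y : E}
    {lam d C T : ℝ} (hA : ∀ v, lam * ‖v‖ ^ 2 ≤ inner ℝ (A v) v) (hlam : 0 < lam + d)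
    (hf : ∀ s ∈ Icc 0 T, ‖f s‖ ≤ C)
    (hu : IsForcedMildSolution A (fun s ↦ f s - d • u s) y T u) :
    ∀ t ∈ Icc 0 T, ‖u t‖ ≤ Real.exp (-(lam + d) * t) * ‖y‖ + C / (lam + d) := by
  have hcoercive (v : E) :
      (lam + d) * ‖v‖ ^ 2 ≤ inner ℝ ((A + d • (1 : E →L[ℝ] E)) v) v := by
    simp only [add_apply, smul_apply, one_apply_eq_self, inner_add_left, real_inner_smul_left,
      real_inner_self_eq_norm_sq]
    linarith [hA v]
  intro t ht
  rw [neg_mul]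
  exact hu.add_smul_one.norm_le_exp_mul_add_div hlam
    (fun _ hτ v ↦ norm_exp_neg_smul_apply_le hcoercive hτ v) hf ht

/-- dissipativity estimate (Step 3 of the proof of Theorem 2, case δ = 0):
if `⟨Av,v⟩ ≥ λ₁‖v‖²` and `‖b‖ ≤ C_b`, then any mild solution satisfies
`‖u(t)‖ ≤ e^{−(λ₁+d)t}‖φ(0)‖ + C_b/(λ₁+d)`. -/
theorem mild_solution_dissipative
    {n : ℕ} (hn : 1 ≤ n) (r : ℝ) (hr : 0 < r)
    (A : Matrix (Fin n) (Fin n) ℝ) (hAs : A.IsSymm)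
    (lam : ℝ) (hlam : 0 < lam)
    (hA : ∀ v : EuclideanSpace ℝ (Fin n), lam * ‖v‖ ^ 2 ≤ (inner ℝ (Matrix.toEuclideanLin A v) v : ℝ))
    (d : ℝ) (hd : 0 ≤ d)
    (b : EuclideanSpace ℝ (Fin n) → EuclideanSpace ℝ (Fin n))
    (Cb : ℝ) (hCb : 0 ≤ Cb) (hb : ∀ w, ‖b w‖ ≤ Cb)
    (η : C(Set.Icc (-r) (0:ℝ), EuclideanSpace ℝ (Fin n)) → ℝ)
    (hηrange : ∀ φ, η φ ∈ Set.Icc (0:ℝ) r)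
    (T : ℝ) (hT : 0 < T)
    (φ : C(Set.Icc (-r) (0:ℝ), EuclideanSpace ℝ (Fin n)))
    (u : ℝ → EuclideanSpace ℝ (Fin n))
    (hu : IsMildSolution r hr T d A b η φ u) :
    ∀ t ∈ Set.Icc (0:ℝ) T,
      ‖u t‖ ≤ Real.exp (-(lam + d) * t) * ‖φ ⟨0, Set.right_mem_Icc.mpr (by linarith)⟩‖
        + Cb / (lam + d) := by
  exact mild_solution_dissipative_general hA (by linarith) (fun _ _ ↦ hb _) hu.isForcedMildSolution
end
end

section
/- Let n ≥ 1, let A be a real n×n symmetric positive definite matrix, let v ∈ ℝⁿ, and let 0 < t₁ ≤ t₂. Then ‖exp(−t₁ A)·v − exp(−t₂ A)·v‖ ≤ (2e·t₁)^{−1/2} · (t₂ − t₁)^{1/2} · ‖v‖, where exp denotes the matrix exponential and ‖·‖ the Euclidean norm. -/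
noncomputable section

/-!
By the functional calculus it suffices to bound `e^{-t₁x} - e^{-t₂x} = e^{-t₁x}(1 - e^{-(t₂-t₁)x})`
for `x ≥ 0`. The second factor is at most `((t₂-t₁)x)^θ` for every `θ ∈ [0, 1]`, and the power `x^θ`
so created is absorbed by the first factor, since `x^θ e^{-t₁x}` is maximal at `x = θ/t₁`, with
value `(θ/(e t₁))^θ`. The constant `(2e t₁)^{-1/2}` is the case `θ = 1/2`.
-/

section RealExponential

open Real

variable {θ x t t₁ t₂ : ℝ}

theorem rpow_mul_exp_neg_mul_le (hθ : 0 ≤ θ) (hx : 0 ≤ x) (ht : 0 < t) :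
    x ^ θ * exp (-(t * x)) ≤ (θ / (exp 1 * t)) ^ θ := by
  rcases hθ.eq_or_lt with rfl | hθ
  · simpa using mul_nonneg ht.le hx
  set y := t * x / θ with hy
  have : 0 ≤ y := by positivity
  have hexp : exp (-(t * x)) = exp (-y) ^ θ := by
    rw [← exp_mul, hy]
    congr 1
    field_simp
  calc x ^ θ * exp (-(t * x))
      = (x * exp (-y)) ^ θ := by rw [hexp, mul_rpow hx (exp_pos _).le]
    _ = (θ / t * (y * exp (-y))) ^ θ := by
        rw [hy]
        congr 1
        field_simp
    _ ≤ (θ / t * exp (-1)) ^ θ := by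
        gcongr
        exact mul_exp_neg_le_exp_neg_one y
    _ = (θ / (exp 1 * t)) ^ θ := by
        rw [exp_neg]
        congr 1
        field_simp

theorem one_sub_exp_neg_le_rpow (hθ₀ : 0 ≤ θ) (hθ₁ : θ ≤ 1) (hx : 0 ≤ x) :
    1 - exp (-x) ≤ x ^ θ := by
  have h_nonneg : 0 ≤ 1 - exp (-x) := by simpa using hx
  have h_le_one : 1 - exp (-x) ≤ 1 := by simpa using (exp_pos (-x)).le
  calc 1 - exp (-x)
      ≤ (1 - exp (-x)) ^ θ := self_le_rpow_of_le_one h_nonneg h_le_one hθ₁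
    _ ≤ x ^ θ := by
        gcongr
        linarith [one_sub_le_exp_neg x]

theorem abs_exp_neg_mul_sub_exp_neg_mul_le (hθ₀ : 0 ≤ θ) (hθ₁ : θ ≤ 1) (hx : 0 ≤ x)
    (ht₁ : 0 < t₁) (ht : t₁ ≤ t₂) :
    |exp (-(t₁ * x)) - exp (-(t₂ * x))| ≤ (θ / (exp 1 * t₁)) ^ θ * (t₂ - t₁) ^ θ := by
  have hs : 0 ≤ t₂ - t₁ := sub_nonneg.2 ht
  have hfactor : exp (-(t₁ * x)) - exp (-(t₂ * x)) =
      exp (-(t₁ * x)) * (1 - exp (-((t₂ - t₁) * x))) := by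
    rw [mul_sub, mul_one, ← exp_add]
    ring_nf
  have h_nonneg : 0 ≤ exp (-(t₁ * x)) - exp (-(t₂ * x)) :=
    sub_nonneg.2 (by gcongr)
  calc |exp (-(t₁ * x)) - exp (-(t₂ * x))|
      = exp (-(t₁ * x)) * (1 - exp (-((t₂ - t₁) * x))) := by rw [abs_of_nonneg h_nonneg, hfactor]
    _ ≤ exp (-(t₁ * x)) * ((t₂ - t₁) * x) ^ θ := by
        gcongr
        exact one_sub_exp_neg_le_rpow hθ₀ hθ₁ (by positivity)
    _ = x ^ θ * exp (-(t₁ * x)) * (t₂ - t₁) ^ θ := by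
        rw [mul_rpow hs hx]
        ring
    _ ≤ (θ / (exp 1 * t₁)) ^ θ * (t₂ - t₁) ^ θ := by
        gcongr
        exact rpow_mul_exp_neg_mul_le hθ₀ hx ht₁

end RealExponential

section FunctionalCalculus

variable {𝒜 : Type*} [NormedRing 𝒜] [StarRing 𝒜] [NormedAlgebra ℝ 𝒜]

theorem exp_neg_smul_eq_cfc [ContinuousFunctionalCalculus ℝ 𝒜 IsSelfAdjoint] {a : 𝒜}
    (ha : IsSelfAdjoint a) (t : ℝ) :
    NormedSpace.exp (-(t • a)) = cfc (fun x ↦ Real.exp (-(t * x))) a := by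
  have hta : cfc (fun x : ℝ ↦ -(t * x)) a = -(t • a) := by
    rw [cfc_neg, cfc_const_mul_id t a]
  rw [cfc_comp' Real.exp (fun x ↦ -(t * x)) a, hta,
    CFC.real_exp_eq_normedSpace_exp (hta ▸ cfc_predicate _ a)]

theorem norm_exp_neg_smul_sub_exp_neg_smul_le
    [IsometricContinuousFunctionalCalculus ℝ 𝒜 IsSelfAdjoint] {a : 𝒜} (ha : IsSelfAdjoint a)
    (hspec : ∀ x ∈ spectrum ℝ a, 0 ≤ x) {θ t₁ t₂ : ℝ} (hθ₀ : 0 ≤ θ) (hθ₁ : θ ≤ 1)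
    (ht₁ : 0 < t₁) (ht : t₁ ≤ t₂) :
    ‖NormedSpace.exp (-(t₁ • a)) - NormedSpace.exp (-(t₂ • a))‖ ≤
      (θ / (Real.exp 1 * t₁)) ^ θ * (t₂ - t₁) ^ θ := by
  have : 0 ≤ t₂ - t₁ := sub_nonneg.2 ht
  rw [exp_neg_smul_eq_cfc ha, exp_neg_smul_eq_cfc ha, ← cfc_sub ..]
  exact norm_cfc_le (by positivity) fun x hx ↦
    abs_exp_neg_mul_sub_exp_neg_mul_le hθ₀ hθ₁ (hspec x hx) ht₁ ht

end FunctionalCalculus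

open scoped ComplexOrder MatrixOrder Matrix.Norms.L2Operator in
theorem matrix_semigroup_holder_estimate_general {𝕜 n : Type*} [RCLike 𝕜] [Fintype n]
    [DecidableEq n] {A : Matrix n n 𝕜} (hA : A.PosSemidef) (v : EuclideanSpace 𝕜 n)
    {θ t₁ t₂ : ℝ} (hθ₀ : 0 ≤ θ) (hθ₁ : θ ≤ 1) (ht₁ : 0 < t₁) (ht : t₁ ≤ t₂) :
    ‖Matrix.toEuclideanLin (NormedSpace.exp (-(t₁ • A))) v -
        Matrix.toEuclideanLin (NormedSpace.exp (-(t₂ • A))) v‖ ≤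
      (θ / (Real.exp 1 * t₁)) ^ θ * (t₂ - t₁) ^ θ * ‖v‖ := by
  have norm_real_smul_le (r : ℝ) (B : Matrix n n 𝕜) : ‖r • B‖ ≤ ‖r‖ * ‖B‖ := by
    rw [← algebraMap_smul 𝕜 r B, norm_smul, norm_algebraMap']
  have hspec : ∀ x ∈ spectrum ℝ A, 0 ≤ x := fun _ hx ↦ spectrum_nonneg_of_nonneg hA.nonneg hx
  -- Built on the entrywise `ℝ`-algebra structure of the functional calculus for matrices;
  -- unification does not identify it with that of `NormedAlgebra.restrictScalars ℝ 𝕜`.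
  let : NormedAlgebra ℝ (Matrix n n 𝕜) := { norm_smul_le := norm_real_smul_le }
  rw [← LinearMap.sub_apply, ← map_sub]
  refine (Matrix.l2_opNorm_mulVec _ v).trans ?_
  gcongr
  exact norm_exp_neg_smul_sub_exp_neg_smul_le hA.isHermitian hspec hθ₀ hθ₁ ht₁ ht

/-- the matrix form of estimate (sdd8-5-5) with δ = 0: for a symmetric
positive definite matrix `A` and `0 < t₁ ≤ t₂`,
`‖e^{−t₁A}v − e^{−t₂A}v‖ ≤ (2e t₁)^{−1/2} (t₂−t₁)^{1/2} ‖v‖`. -/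
theorem matrix_semigroup_holder_estimate
    {n : ℕ} (hn : 1 ≤ n)
    (A : Matrix (Fin n) (Fin n) ℝ) (hA : A.PosDef) (hAs : A.IsSymm)
    (v : EuclideanSpace ℝ (Fin n)) (t₁ t₂ : ℝ) (ht₁ : 0 < t₁) (ht : t₁ ≤ t₂) :
    ‖Matrix.toEuclideanLin (NormedSpace.exp (-(t₁ • A))) v -
        Matrix.toEuclideanLin (NormedSpace.exp (-(t₂ • A))) v‖ ≤
      (2 * Real.exp 1 * t₁) ^ (-(1 / 2 : ℝ)) * (t₂ - t₁) ^ ((1 / 2 : ℝ)) * ‖v‖ := by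
  rw [Real.rpow_neg_eq_inv_rpow, show (2 * Real.exp 1 * t₁)⁻¹ = 1 / 2 / (Real.exp 1 * t₁) by ring]
  exact matrix_semigroup_holder_estimate_general hA.posSemidef v (by simp) (by norm_num) ht₁ ht
end
end
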